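/- There exists an absolute constant c > 0 such that the following holds. Let f : {0,1}^n → ℝ, let d ≥ 1, and let (J, z) be a random restriction where each j ∈ [n] is included in J independently with probability 1/d and z is uniform in {0,1}^{[n]∖J}. Then E_{J,z}[W_{=1}[f_{([n]∖J)→z}]] ≥ c·W_{≈d}[f]. -/

import Mathlib

open Finset

noncomputable section

/-- Expectation over the uniform distribution on `{0,1}^n`. -/
def hcExp (n : ℕ) (g : (Fin n → Bool) → ℝ) : ℝ :=
  (∑ x : Fin n → Bool, g x) / 2 ^ n

/-- Flip the `i`-th coordinate of `x`. -/
def hcFlip {n : ℕ} (x : Fin n → Bool) (i : Fin n) : Fin n → Bool :=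
  Function.update x i (!(x i))

/-- Sensitivity of `f` at `x`. -/
def sens {n : ℕ} (f : (Fin n → Bool) → Bool) (x : Fin n → Bool) : ℕ :=
  (Finset.univ.filter fun i => f (hcFlip x i) ≠ f x).card

/-- `f` with values in `{0,1} ⊆ ℝ`. -/
def toReal {n : ℕ} (f : (Fin n → Bool) → Bool) : (Fin n → Bool) → ℝ :=
  fun x => if f x then 1 else 0

/-- Variance of a Boolean function. -/
def hcVar (n : ℕ) (f : (Fin n → Bool) → Bool) : ℝ :=
  hcExp n (toReal f) - (hcExp n (toReal f)) ^ 2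

/-- Influence of coordinate `i`. -/
def influence (n : ℕ) (f : (Fin n → Bool) → Bool) (i : Fin n) : ℝ :=
  hcExp n (fun x => if f (hcFlip x i) = f x then 0 else 1)

/-- Fourier character. -/
def chi {n : ℕ} (S : Finset (Fin n)) (x : Fin n → Bool) : ℝ :=
  ∏ i ∈ S, (if x i then (-1 : ℝ) else 1)

/-- Fourier coefficient of `g` at `S`. -/
def fcoef (n : ℕ) (g : (Fin n → Bool) → ℝ) (S : Finset (Fin n)) : ℝ :=
  hcExp n (fun x => g x * chi S x)

/-- Derivative of `g` along coordinate `i`. -/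
def derivOn {n : ℕ} (g : (Fin n → Bool) → ℝ) (i : Fin n) (x : Fin n → Bool) : ℝ :=
  g (Function.update x i false) - g (Function.update x i true)

/-- Euclidean norm of the gradient of `g` at `x`. -/
def gradNorm2 {n : ℕ} (g : (Fin n → Bool) → ℝ) (x : Fin n → Bool) : ℝ :=
  Real.sqrt (∑ i, (derivOn g i x) ^ 2)

/-- `ℓ_p` norm of the gradient of `g` at `x`. -/
def gradNormP {n : ℕ} (p : ℝ) (g : (Fin n → Bool) → ℝ) (x : Fin n → Bool) : ℝ :=
  (∑ i, |derivOn g i x| ^ p) ^ (1 / p)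

/-- Fourier weight at exactly level `d`. -/
def wEq (n : ℕ) (g : (Fin n → Bool) → ℝ) (d : ℕ) : ℝ :=
  ∑ S ∈ Finset.univ.filter (fun S : Finset (Fin n) => S.card = d), (fcoef n g S) ^ 2

/-- Approximate level-`d` Fourier weight: levels in `[d, 2d)`. -/
def wApprox (n : ℕ) (g : (Fin n → Bool) → ℝ) (d : ℕ) : ℝ :=
  ∑ S ∈ Finset.univ.filter (fun S : Finset (Fin n) => d ≤ S.card ∧ S.card < 2 * d),
    (fcoef n g S) ^ 2

/-- Fourier weight at levels `≥ d`. -/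
def wGe (n : ℕ) (g : (Fin n → Bool) → ℝ) (d : ℕ) : ℝ :=
  ∑ S ∈ Finset.univ.filter (fun S : Finset (Fin n) => d ≤ S.card), (fcoef n g S) ^ 2


/-- The restriction of `f` in which the coordinates of `J` are alive and the
coordinates outside `J` are fixed according to `z`, viewed as a function on the
full cube (it depends only on the coordinates in `J`). -/
def restrictTo {n : ℕ} (f : (Fin n → Bool) → ℝ) (J : Finset (Fin n))
    (z : Fin n → Bool) : (Fin n → Bool) → ℝ :=
  fun y => f (fun i => if i ∈ J then y i else z i)

/-- Level-1 Fourier weight of the restriction `f_{([n]∖J) → z}` with alive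
coordinates `J`: since the restriction does not depend on coordinates outside
`J`, its degree-1 coefficients on the subcube `{0,1}^J` coincide with the
coefficients `f̂({j})`, `j ∈ J`, of `restrictTo f J z` on the full cube (all
other singleton coefficients vanish). -/
def wOneRestriction {n : ℕ} (f : (Fin n → Bool) → ℝ) (J : Finset (Fin n))
    (z : Fin n → Bool) : ℝ :=
  ∑ j ∈ J, (fcoef n (restrictTo f J z) {j}) ^ 2

def sg (b : Bool) : ℝ := if b then (-1 : ℝ) else 1

lemma chi_eq_prod {n : ℕ} (S : Finset (Fin n)) (x : Fin n → Bool) :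
    chi S x = ∏ i, (if i ∈ S then sg (x i) else 1) := by
  unfold chi sg
  rw [Finset.prod_ite_mem]
  simp

lemma sum_prod_bool {n : ℕ} (h : Fin n → Bool → ℝ) :
    ∑ x : Fin n → Bool, ∏ i, h i (x i) = ∏ i, (h i true + h i false) := by
  have := Finset.prod_univ_sum (fun _ : Fin n => (Finset.univ : Finset Bool)) h
  rw [Fintype.piFinset_univ] at this
  rw [← this]
  simp

lemma chi_orth {n : ℕ} (S T : Finset (Fin n)) :
    ∑ x : Fin n → Bool, chi S x * chi T x = if S = T then (2 : ℝ) ^ n else 0 := by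
  simp only [chi_eq_prod, ← Finset.prod_mul_distrib]
  rw [sum_prod_bool (fun i b => (if i ∈ S then sg b else 1) * (if i ∈ T then sg b else 1))]
  split_ifs with h
  · subst h
    rw [Finset.prod_congr rfl (g := fun _ => (2 : ℝ))]
    · simp
    · intro i _
      by_cases hi : i ∈ S <;> simp [hi, sg] <;> norm_num
  · have : ∃ i, ¬ (i ∈ S ↔ i ∈ T) := by
      by_contra hc
      push Not at hc
      exact h (Finset.ext hc)
    obtain ⟨i, hi⟩ := this
    apply Finset.prod_eq_zero (Finset.mem_univ i)
    by_cases h1 : i ∈ S <;> by_cases h2 : i ∈ T <;> simp_all [sg]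

lemma chi_dual {n : ℕ} (x y : Fin n → Bool) :
    ∑ S : Finset (Fin n), chi S x * chi S y = if x = y then (2 : ℝ) ^ n else 0 := by
  have h1 : ∑ S : Finset (Fin n), chi S x * chi S y = ∏ i, (1 + sg (x i) * sg (y i)) := by
    rw [Finset.prod_one_add]
    simp only [Finset.powerset_univ]
    apply Finset.sum_congr rfl
    intro S _
    unfold chi sg
    rw [Finset.prod_mul_distrib]
  rw [h1]
  split_ifs with h
  · subst h
    rw [Finset.prod_congr rfl (g := fun _ => (2 : ℝ))]
    · simp
    · intro i _
      cases x i <;> simp [sg] <;> norm_num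
  · obtain ⟨i, hi⟩ := Function.ne_iff.mp h
    apply Finset.prod_eq_zero (Finset.mem_univ i)
    revert hi
    cases x i <;> cases y i <;> simp [sg]

lemma inversion {n : ℕ} (f : (Fin n → Bool) → ℝ) (x : Fin n → Bool) :
    f x = ∑ S, fcoef n f S * chi S x := by
  unfold fcoef hcExp
  have : ∀ S : Finset (Fin n), (∑ y, f y * chi S y) / 2 ^ n * chi S x
      = ∑ y, f y / 2 ^ n * (chi S y * chi S x) := by
    intro S
    rw [Finset.sum_div, Finset.sum_mul]
    apply Finset.sum_congr rfl
    intro y _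
    ring
  simp only [this]
  rw [Finset.sum_comm]
  simp only [← Finset.mul_sum, chi_dual]
  simp

lemma chi_mix {n : ℕ} (S J : Finset (Fin n)) (y z : Fin n → Bool) :
    chi S (fun i => if i ∈ J then y i else z i) = chi (S ∩ J) y * chi (S \ J) z := by
  simp only [chi_eq_prod, ← Finset.prod_mul_distrib]
  apply Finset.prod_congr rfl
  intro i _
  by_cases h1 : i ∈ S <;> by_cases h2 : i ∈ J <;> simp [h1, h2]

lemma fcoef_restrict {n : ℕ} (f : (Fin n → Bool) → ℝ) (J : Finset (Fin n))
    (z : Fin n → Bool) (j : Fin n) :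
    fcoef n (restrictTo f J z) {j} =
      ∑ S, (if S ∩ J = {j} then fcoef n f S else 0) * chi (S \ J) z := by
  have h2 : (2 : ℝ) ^ n ≠ 0 := by positivity
  conv_lhs => unfold fcoef hcExp restrictTo
  rw [div_eq_iff h2]
  have : ∀ y, f (fun i => if i ∈ J then y i else z i) * chi {j} y =
      ∑ S, fcoef n f S * chi (S \ J) z * (chi (S ∩ J) y * chi {j} y) := by
    intro y
    rw [inversion f, Finset.sum_mul]
    apply Finset.sum_congr rfl
    intro S _
    rw [chi_mix]
    ring
  simp only [this]
  rw [Finset.sum_comm, Finset.sum_mul]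
  apply Finset.sum_congr rfl
  intro S _
  rw [← Finset.mul_sum, chi_orth]
  split_ifs <;> ring

lemma exp_sq {n : ℕ} (f : (Fin n → Bool) → ℝ) (J : Finset (Fin n)) (j : Fin n) :
    ∑ z, (fcoef n (restrictTo f J z) {j}) ^ 2 =
      2 ^ n * ∑ S, (if S ∩ J = {j} then fcoef n f S ^ 2 else 0) := by
  simp only [fcoef_restrict, sq, Finset.sum_mul_sum]
  rw [Finset.sum_comm, Finset.mul_sum]
  apply Finset.sum_congr rfl
  intro S _
  rw [Finset.sum_comm]
  have : ∀ T : Finset (Fin n), ∑ z, (if S ∩ J = {j} then fcoef n f S else 0) * chi (S \ J) z *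
      ((if T ∩ J = {j} then fcoef n f T else 0) * chi (T \ J) z) =
      if T = S then 2 ^ n * (if S ∩ J = {j} then fcoef n f S * fcoef n f S else 0) else 0 := by
    intro T
    have e : ∀ z, (if S ∩ J = {j} then fcoef n f S else 0) * chi (S \ J) z *
      ((if T ∩ J = {j} then fcoef n f T else 0) * chi (T \ J) z) =
      ((if S ∩ J = {j} then fcoef n f S else 0) * (if T ∩ J = {j} then fcoef n f T else 0)) *
        (chi (S \ J) z * chi (T \ J) z) := fun z => by ring
    simp only [e]
    rw [← Finset.mul_sum, chi_orth]
    by_cases h1 : S ∩ J = {j}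
    · by_cases h2 : T ∩ J = {j}
      · have : S \ J = T \ J ↔ T = S := by
          constructor
          · intro h
            rw [← Finset.sdiff_union_inter S J, ← Finset.sdiff_union_inter T J, h, h1, h2]
          · rintro rfl; rfl
        simp only [this, h1, h2, if_true]
        split_ifs with h
        · subst h; ring
        · ring
      · have : T ≠ S := by rintro rfl; exact h2 h1
        simp [h2, this]
    · simp [h1]
  simp only [this]
  simp

lemma weight_sum {n : ℕ} (p : ℝ) (S : Finset (Fin n)) (j : Fin n) (hj : j ∈ S) :
    ∑ J : Finset (Fin n), (if S ∩ J = {j} then p ^ J.card * (1 - p) ^ (n - J.card) else 0)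
      = p * (1 - p) ^ (S.card - 1) := by
  have key := Finset.prod_add (fun i => if i ∈ S ∧ i ≠ j then (0 : ℝ) else p)
    (fun i => if i = j then (0 : ℝ) else 1 - p) (Finset.univ : Finset (Fin n))
  have hl : ∏ i : Fin n, ((if i ∈ S ∧ i ≠ j then (0 : ℝ) else p) +
      (if i = j then (0 : ℝ) else 1 - p)) = p * (1 - p) ^ (S.card - 1) := by
    rw [← Finset.mul_prod_erase _ _ (Finset.mem_univ j)]
    congr 1
    · simp
    · rw [← Finset.card_erase_of_mem hj, ← Finset.prod_const]
      symm
      rw [← Finset.prod_subset (Finset.erase_subset_erase j (Finset.subset_univ S))]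
      · apply Finset.prod_congr rfl
        intro i hi
        rw [Finset.mem_erase] at hi
        simp [hi.1, hi.2]
      · intro i hi hi'
        rw [Finset.mem_erase] at hi hi'
        have : i ∉ S := fun h => hi' ⟨hi.1, h⟩
        simp [hi.1, this]
  rw [← hl, key, Finset.powerset_univ]
  apply Finset.sum_congr rfl
  intro J _
  split_ifs with h
  · have hh : ∀ i, (i ∈ S ∧ i ∈ J) ↔ i = j := by
      intro i
      rw [← Finset.mem_inter, h, Finset.mem_singleton]
    congr 1
    · rw [← Finset.prod_const]
      apply Finset.prod_congr rfl
      intro i hi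
      rw [if_neg]
      rintro ⟨a, b⟩
      exact b ((hh i).1 ⟨a, hi⟩)
    · have : n - J.card = (Finset.univ \ J).card := by
        rw [Finset.card_univ_sdiff]; simp
      rw [this, ← Finset.prod_const]
      apply Finset.prod_congr rfl
      intro i hi
      rw [if_neg]
      rintro rfl
      exact (Finset.mem_sdiff.1 hi).2 ((hh i).2 rfl).2
  · symm
    by_cases hjJ : j ∈ J
    · have : ∃ i, i ∈ S ∧ i ∈ J ∧ i ≠ j := by
        by_contra hc
        push Not at hc
        apply h
        ext i
        rw [Finset.mem_inter, Finset.mem_singleton]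
        constructor
        · rintro ⟨a, b⟩; exact hc i a b
        · rintro rfl; exact ⟨hj, hjJ⟩
      obtain ⟨i, a, b, e⟩ := this
      rw [Finset.prod_eq_zero b (by simp [a, e]), zero_mul]
    · rw [Finset.prod_eq_zero (i := j) (s := Finset.univ \ J) (by simp [hjJ]) (by simp), mul_zero]

lemma total {n : ℕ} (f : (Fin n → Bool) → ℝ) (p : ℝ) :
    (∑ J : Finset (Fin n), p ^ J.card * (1 - p) ^ (n - J.card) *
          hcExp n (fun z => wOneRestriction f J z)) =
      ∑ S, (S.card * (p * (1 - p) ^ (S.card - 1))) * fcoef n f S ^ 2 := by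
  have h2 : (2 : ℝ) ^ n ≠ 0 := by positivity
  have h1 : ∀ J : Finset (Fin n), hcExp n (fun z => wOneRestriction f J z) =
      ∑ S, ∑ j ∈ S, (if S ∩ J = {j} then fcoef n f S ^ 2 else 0) := by
    intro J
    unfold hcExp wOneRestriction
    rw [Finset.sum_comm, div_eq_iff h2]
    simp only [exp_sq]
    rw [← Finset.mul_sum, mul_comm]
    congr 1
    rw [Finset.sum_comm]
    apply Finset.sum_congr rfl
    intro S _
    have aux : ∀ A : Finset (Fin n), S ∩ J ⊆ A →
        ∑ j ∈ A, (if S ∩ J = {j} then fcoef n f S ^ 2 else 0) =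
        ∑ j ∈ S ∩ J, (if S ∩ J = {j} then fcoef n f S ^ 2 else 0) := by
      intro A hA
      symm
      apply Finset.sum_subset hA
      intro j _ hj
      rw [if_neg]
      intro h
      exact hj (h ▸ Finset.mem_singleton_self j)
    rw [aux J Finset.inter_subset_right, aux S Finset.inter_subset_left]
  simp only [h1, Finset.mul_sum]
  rw [Finset.sum_comm]
  apply Finset.sum_congr rfl
  intro S _
  rw [Finset.sum_comm]
  rw [Finset.sum_congr rfl (g := fun _ => p * (1 - p) ^ (S.card - 1) * fcoef n f S ^ 2)]
  · simp only [Finset.sum_const, nsmul_eq_mul]; ring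
  · intro j hj
    rw [← weight_sum p S j hj, Finset.sum_mul]
    apply Finset.sum_congr rfl
    intro J _
    split_ifs <;> simp

lemma coef_bound (d k : ℕ) (hd : 1 ≤ d) (h1 : d ≤ k) (h2 : k < 2 * d) :
    Real.exp (-2) ≤ k * (1 / (d : ℝ) * (1 - 1 / (d : ℝ)) ^ (k - 1)) := by
  have hd0 : (0 : ℝ) < d := by exact_mod_cast hd
  have hkd : (1 : ℝ) ≤ k * (1 / d) := by
    rw [mul_one_div, le_div_iff₀ hd0, one_mul]; exact_mod_cast h1
  have hp : Real.exp (-2) ≤ (1 - 1 / (d : ℝ)) ^ (k - 1) := by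
    obtain ⟨m, rfl⟩ : ∃ m, d = m + 1 := ⟨d - 1, by omega⟩
    rcases Nat.eq_zero_or_pos m with rfl | hm
    · have : k = 1 := by omega
      subst this
      simp
    · have hm0 : (0 : ℝ) < m := by exact_mod_cast hm
      have hb : Real.exp (-(1 / m)) ≤ 1 - 1 / ((m + 1 : ℕ) : ℝ) := by
        have e : 1 - 1 / ((m + 1 : ℕ) : ℝ) = (1 / (m : ℝ) + 1)⁻¹ := by
          push_cast
          field_simp
          ring
        rw [e, Real.exp_neg]
        exact inv_anti₀ (by positivity) (Real.add_one_le_exp _)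
      calc Real.exp (-2) ≤ Real.exp (-(1 / m)) ^ (k - 1) := by
            rw [← Real.exp_nat_mul, Real.exp_le_exp]
            have : ((k - 1 : ℕ) : ℝ) ≤ 2 * m := by exact_mod_cast (by omega : k - 1 ≤ 2 * m)
            have h3 : ((k - 1 : ℕ) : ℝ) * (1 / m) ≤ 2 := by
              rw [mul_one_div, div_le_iff₀ hm0]; exact this
            linarith
        _ ≤ _ := pow_le_pow_left₀ (Real.exp_pos _).le hb _
  rw [← mul_assoc]
  have := Real.exp_pos (-2)
  nlinarith

theorem random_restriction_level_one :
    ∃ c : ℝ, 0 < c ∧ ∀ (n : ℕ) (f : (Fin n → Bool) → ℝ) (d : ℕ), 1 ≤ d →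
      (∑ J : Finset (Fin n),
        (1 / (d : ℝ)) ^ J.card * (1 - 1 / (d : ℝ)) ^ (n - J.card) *
          hcExp n (fun z => wOneRestriction f J z)) ≥ c * wApprox n f d := by
  refine ⟨Real.exp (-2), Real.exp_pos _, ?_⟩
  intro n f d hd
  rw [total, ge_iff_le, wApprox, Finset.mul_sum]
  have hd1 : (1 : ℝ) ≤ d := by exact_mod_cast hd
  have hq : (0 : ℝ) ≤ 1 - 1 / d := by
    rw [sub_nonneg, div_le_one (by linarith)]; exact hd1
  calc _ ≤ ∑ S ∈ Finset.univ.filter (fun S : Finset (Fin n) => d ≤ S.card ∧ S.card < 2 * d),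
      (S.card * (1 / (d : ℝ) * (1 - 1 / (d : ℝ)) ^ (S.card - 1))) * fcoef n f S ^ 2 := by
        apply Finset.sum_le_sum
        intro S hS
        rw [Finset.mem_filter] at hS
        exact mul_le_mul_of_nonneg_right (coef_bound d _ hd hS.2.1 hS.2.2) (sq_nonneg _)
    _ ≤ _ := by
        apply Finset.sum_le_sum_of_subset_of_nonneg (Finset.filter_subset _ _)
        intro S _ _
        have := pow_nonneg hq (S.card - 1)
        positivity

end
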